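/- For any two orthogonal projections P, Q on H, one has ρ(P,Q) < π/2 if and only if ‖P − Q‖ < 1; moreover, if ‖P − Q‖ < 1 then ρ(P,Q) = arcsin(‖P − Q‖). -/

import Mathlib

open ContinuousLinearMap
open scoped ENNReal

/-- `P` is an orthogonal projection: `P = P* = P²`. -/
def IsOrthogonalProjection {H : Type*} [NormedAddCommGroup H] [InnerProductSpace ℂ H]
    [CompleteSpace H] (P : H →L[ℂ] H) : Prop :=
  IsSelfAdjoint P ∧ P * P = P

/-- A map `γ` is a piecewise `C¹`-smooth path on `[a,b]` if there is a partition
`a = t₀ < … < t_n = b` such that `γ` is `C¹`-smooth on each `[t_j, t_{j+1}]`. -/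
def PiecewiseC1On {E : Type*} [NormedAddCommGroup E] [NormedSpace ℝ E]
    (γ : ℝ → E) (a b : ℝ) : Prop :=
  ∃ (n : ℕ) (t : ℕ → ℝ), t 0 = a ∧ t n = b ∧ (∀ i < n, t i < t (i + 1)) ∧
    ∀ i < n, ContDiffOn ℝ 1 γ (Set.Icc (t i) (t (i + 1)))

/-- The length (inner) metric `ρ` on the set of orthogonal projections: the infimum of the
lengths (total variations) of continuous paths of orthogonal projections joining `P` to `Q`
(parametrized by `[0,1]`), with value `∞` if there is no such path. -/
noncomputable def projLengthMetric {H : Type*} [NormedAddCommGroup H] [InnerProductSpace ℂ H]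
    [CompleteSpace H] (P Q : H →L[ℂ] H) : ℝ≥0∞ :=
  ⨅ (γ : ℝ → (H →L[ℂ] H)) (_ : ContinuousOn γ (Set.Icc (0:ℝ) 1))
    (_ : ∀ t ∈ Set.Icc (0:ℝ) 1, IsOrthogonalProjection (γ t))
    (_ : γ 0 = P) (_ : γ 1 = Q), eVariationOn γ (Set.Icc (0:ℝ) 1)


section Lower
variable {H : Type*} [NormedAddCommGroup H] [InnerProductSpace ℂ H] [CompleteSpace H]

lemma IsOrthogonalProjection.compl {P : H →L[ℂ] H} (hP : IsOrthogonalProjection P) :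
    IsOrthogonalProjection (1 - P) := by
  refine ⟨(IsSelfAdjoint.one _).sub hP.1, ?_⟩
  have := hP.2
  simp [sub_mul, mul_sub, this]

lemma IsOrthogonalProjection.inner_left {P : H →L[ℂ] H} (hP : IsOrthogonalProjection P) (x y : H) :
    inner ℂ (P x) y = inner ℂ x (P y) := by
  have h := ContinuousLinearMap.adjoint_inner_left P y x
  rwa [← ContinuousLinearMap.star_eq_adjoint, hP.1.star_eq] at h

lemma IsOrthogonalProjection.apply_apply {P : H →L[ℂ] H} (hP : IsOrthogonalProjection P) (x : H) :
    P (P x) = P x := congrArg (fun T : H →L[ℂ] H => T x) hP.2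

lemma IsOrthogonalProjection.inner_self {P : H →L[ℂ] H} (hP : IsOrthogonalProjection P) (x : H) :
    RCLike.re (inner ℂ x (P x)) = ‖P x‖ ^ 2 := by
  rw [← hP.apply_apply, ← hP.inner_left, ← norm_sq_eq_re_inner (𝕜 := ℂ), hP.apply_apply]

lemma IsOrthogonalProjection.pyth {P : H →L[ℂ] H} (hP : IsOrthogonalProjection P) (x : H) :
    ‖x‖ ^ 2 = ‖P x‖ ^ 2 + ‖x - P x‖ ^ 2 := by
  rw [norm_sub_sq (𝕜 := ℂ), hP.inner_self]; ring

lemma IsOrthogonalProjection.norm_le {P : H →L[ℂ] H} (hP : IsOrthogonalProjection P) (x : H) :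
    ‖P x‖ ≤ ‖x‖ := by
  have := hP.pyth x
  exact abs_le_of_sq_le_sq' (by nlinarith [sq_nonneg ‖x - P x‖]) (norm_nonneg _) |>.2

lemma cos_le_of_sin {p q y a : ℝ} (hy : 0 ≤ y) (hp : 0 ≤ p) (h : y ^ 2 = p ^ 2 + q ^ 2) (hq0 : 0 ≤ q)
    (hq : q ≤ Real.sin a * y) : Real.cos a * y ≤ p := by
  refine (abs_le_of_sq_le_sq' ?_ hp).2
  have := Real.sin_sq_add_cos_sq a
  have h2 : q ^ 2 ≤ (Real.sin a * y) ^ 2 := by gcongr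
  nlinarith

lemma angle_proj_le {Q : H →L[ℂ] H} (hQ : IsOrthogonalProjection Q) {y : H} (hy : y ≠ 0) {a : ℝ}
    (ha0 : 0 ≤ a) (ha : a < Real.pi / 2) (h : ‖y - Q y‖ ≤ Real.sin a * ‖y‖) :
    let := InnerProductSpace.rclikeToReal ℂ H
    Q y ≠ 0 ∧ InnerProductGeometry.angle y (Q y) ≤ a := by
  let := InnerProductSpace.rclikeToReal ℂ H
  have hc : Real.cos a * ‖y‖ ≤ ‖Q y‖ :=
    cos_le_of_sin (norm_nonneg _) (norm_nonneg _) (hQ.pyth y) (norm_nonneg _) h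
  have hcos : 0 < Real.cos a := Real.cos_pos_of_mem_Ioo ⟨by linarith, ha⟩
  have hy' : 0 < ‖y‖ := norm_pos_iff.2 hy
  have hQy : 0 < ‖Q y‖ := lt_of_lt_of_le (by positivity) hc
  refine ⟨norm_pos_iff.1 hQy, ?_⟩
  rw [← Real.arccos_cos ha0 (by linarith [Real.pi_pos]), InnerProductGeometry.angle]
  apply Real.arccos_le_arccos
  have : inner ℝ y (Q y) = ‖Q y‖ ^ 2 := hQ.inner_self y
  rw [this, le_div_iff₀ (by positivity)]
  nlinarith

lemma proj_tri_vec {P Q R : H →L[ℂ] H} (hP : IsOrthogonalProjection P)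
    (hQ : IsOrthogonalProjection Q) (hR : IsOrthogonalProjection R) {a b : ℝ} (ha : 0 ≤ a)
    (hb : 0 ≤ b) (hab : a + b ≤ Real.pi / 2) (hPQ : ‖P - Q‖ ≤ Real.sin a)
    (hQR : ‖Q - R‖ ≤ Real.sin b) (x : H) :
    ‖P x - R (P x)‖ ≤ Real.sin (a + b) * ‖P x‖ := by
  let := InnerProductSpace.rclikeToReal ℂ H
  set y := P x with hy
  have hpy := hR.pyth y
  rcases eq_or_lt_of_le hab with hab | hab
  · rw [hab, Real.sin_pi_div_two, one_mul]
    simpa using hR.compl.norm_le y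
  by_cases hy0 : y = 0
  · simp [hy0]
  have h1 : ‖y - Q y‖ ≤ Real.sin a * ‖y‖ := by
    have := (P - Q).le_of_opNorm_le hPQ y
    simpa [hy, hP.apply_apply] using this
  obtain ⟨hQ0, hA⟩ := angle_proj_le hQ hy0 ha (by linarith) h1
  have h2 : ‖Q y - R (Q y)‖ ≤ Real.sin b * ‖Q y‖ := by
    have := (Q - R).le_of_opNorm_le hQR (Q y)
    simpa [hQ.apply_apply] using this
  obtain ⟨hR0, hB⟩ := angle_proj_le hR hQ0 hb (by linarith) h2
  have hC := InnerProductGeometry.angle_le_angle_add_angle y (Q y) (R (Q y))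
  have hC' : InnerProductGeometry.angle y (R (Q y)) ≤ a + b := by linarith
  have hcos : Real.cos (a + b) ≤ Real.cos (InnerProductGeometry.angle y (R (Q y))) :=
    Real.cos_le_cos_of_nonneg_of_le_pi (InnerProductGeometry.angle_nonneg _ _)
      (by linarith [Real.pi_pos]) hC'
  have hin : inner ℝ y (R (Q y)) ≤ ‖R y‖ * ‖R (Q y)‖ := by
    change RCLike.re (inner ℂ y (R (Q y))) ≤ _
    rw [← hR.apply_apply (Q y), ← hR.inner_left, hR.apply_apply]
    exact re_inner_le_norm _ _
  rw [← InnerProductGeometry.cos_angle_mul_norm_mul_norm] at hin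
  have hw : 0 < ‖R (Q y)‖ := norm_pos_iff.2 hR0
  have hle : Real.cos (a + b) * ‖y‖ ≤ ‖R y‖ := by
    have : Real.cos (InnerProductGeometry.angle y (R (Q y))) * ‖y‖ ≤ ‖R y‖ := by
      rw [← mul_assoc] at hin
      exact le_of_mul_le_mul_right hin hw
    exact le_trans (by gcongr) this
  have hc0 : 0 ≤ Real.cos (a + b) := Real.cos_nonneg_of_mem_Icc ⟨by linarith, by linarith⟩
  have hs0 : 0 ≤ Real.sin (a + b) := Real.sin_nonneg_of_nonneg_of_le_pi (by linarith) (by linarith)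
  refine (abs_le_of_sq_le_sq' ?_ (by positivity)).2
  have h3 : (Real.cos (a + b) * ‖y‖) ^ 2 ≤ ‖R y‖ ^ 2 := by gcongr
  have := Real.sin_sq_add_cos_sq (a + b)
  nlinarith

lemma proj_norm_sub_le {P R : H →L[ℂ] H}
    (hR : IsOrthogonalProjection R) (hP : IsOrthogonalProjection P) {s : ℝ} (hs : 0 ≤ s)
    (h1 : ∀ x, ‖P x - R (P x)‖ ≤ s * ‖P x‖)
    (h2 : ∀ x, ‖(1 - P) x - (1 - R) ((1 - P) x)‖ ≤ s * ‖(1 - P) x‖) : ‖P - R‖ ≤ s := by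
  refine ContinuousLinearMap.opNorm_le_bound _ hs fun x => ?_
  refine (abs_le_of_sq_le_sq' ?_ (by positivity)).2
  have e := hR.pyth ((P - R) x)
  have e1 : R ((P - R) x) = - ((1 - P) x - (1 - R) ((1 - P) x)) := by
    simp [hR.apply_apply]
  have e2 : (P - R) x - R ((P - R) x) = P x - R (P x) := by
    simp [hR.apply_apply]
  rw [e2, e1, norm_neg] at e
  rw [e]
  have p := hP.pyth x
  have a1 : ‖P x - R (P x)‖ ^ 2 ≤ (s * ‖P x‖) ^ 2 := by gcongr; exact h1 x
  have a2 : ‖(1 - P) x - (1 - R) ((1 - P) x)‖ ^ 2 ≤ (s * ‖(1 - P) x‖) ^ 2 := by gcongr; exact h2 x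
  have a3 : (1 - P) x = x - P x := by simp
  rw [← a3] at p
  rw [mul_pow, p]
  nlinarith

lemma proj_norm_sub_le_one {P R : H →L[ℂ] H}
    (hP : IsOrthogonalProjection P) (hR : IsOrthogonalProjection R) : ‖P - R‖ ≤ 1 := by
  refine proj_norm_sub_le hR hP zero_le_one (fun x => ?_) (fun x => ?_)
  · simpa using hR.compl.norm_le (P x)
  · simpa using hR.norm_le ((1 - P) x)

lemma proj_tri {P Q R : H →L[ℂ] H} (hP : IsOrthogonalProjection P)
    (hQ : IsOrthogonalProjection Q) (hR : IsOrthogonalProjection R) :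
    Real.arcsin ‖P - R‖ ≤ Real.arcsin ‖P - Q‖ + Real.arcsin ‖Q - R‖ := by
  set a := Real.arcsin ‖P - Q‖ with ha
  set b := Real.arcsin ‖Q - R‖ with hb
  have ha0 : 0 ≤ a := Real.arcsin_nonneg.2 (norm_nonneg _)
  have hb0 : 0 ≤ b := Real.arcsin_nonneg.2 (norm_nonneg _)
  rcases le_total (a + b) (Real.pi / 2) with h | h
  · have sa : Real.sin a = ‖P - Q‖ :=
      Real.sin_arcsin (by linarith [norm_nonneg (P - Q)]) (proj_norm_sub_le_one hP hQ)
    have sb : Real.sin b = ‖Q - R‖ :=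
      Real.sin_arcsin (by linarith [norm_nonneg (Q - R)]) (proj_norm_sub_le_one hQ hR)
    have : ‖P - R‖ ≤ Real.sin (a + b) := by
      refine proj_norm_sub_le hR hP
        (Real.sin_nonneg_of_nonneg_of_le_pi (by linarith) (by linarith [Real.pi_pos])) ?_ ?_
      · exact proj_tri_vec hP hQ hR ha0 hb0 h sa.ge sb.ge
      · refine proj_tri_vec hP.compl hQ.compl hR.compl ha0 hb0 h ?_ ?_
        · rw [sub_sub_sub_cancel_left, norm_sub_rev, sa]
        · rw [sub_sub_sub_cancel_left, norm_sub_rev, sb]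
    calc _ ≤ Real.arcsin (Real.sin (a + b)) := Real.monotone_arcsin this
      _ = a + b := Real.arcsin_sin (by linarith [Real.pi_pos]) h
  · exact (Real.arcsin_le_pi_div_two _).trans h

lemma arcsin_small {ε : ℝ} (hε : 0 < ε) :
    ∃ δ > 0, ∀ x : ℝ, 0 ≤ x → x < δ → Real.arcsin x ≤ (1 + ε) * x := by
  have h := Real.hasDerivAt_arcsin (x := 0) (by norm_num) (by norm_num)
  have h2 := (hasDerivAt_iff_isLittleO.1 h).bound hε
  obtain ⟨δ, hδ, hb⟩ := Metric.eventually_nhds_iff.1 h2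
  refine ⟨δ, hδ, fun x hx hxd => ?_⟩
  have := hb (y := x) (by simpa [abs_of_nonneg hx] using hxd)
  simp [abs_of_nonneg hx] at this
  have := (abs_le.1 this).2
  linarith

lemma path_lower {γ : ℝ → (H →L[ℂ] H)} (hc : ContinuousOn γ (Set.Icc (0:ℝ) 1))
    (hp : ∀ t ∈ Set.Icc (0:ℝ) 1, IsOrthogonalProjection (γ t)) :
    ENNReal.ofReal (Real.arcsin ‖γ 0 - γ 1‖) ≤ eVariationOn γ (Set.Icc (0:ℝ) 1) := by
  by_cases hV : eVariationOn γ (Set.Icc (0:ℝ) 1) = ⊤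
  · simp [hV]
  refine ENNReal.ofReal_le_of_le_toReal ?_
  set V := (eVariationOn γ (Set.Icc (0:ℝ) 1)).toReal with hVd
  have hV0 : 0 ≤ V := ENNReal.toReal_nonneg
  have key : ∀ ε > 0, Real.arcsin ‖γ 0 - γ 1‖ ≤ (1 + ε) * V := by
    intro ε hε
    obtain ⟨δ, hδ, hs⟩ := arcsin_small hε
    have huc := isCompact_Icc.uniformContinuousOn_of_continuous hc
    obtain ⟨η, hη, hu⟩ := Metric.uniformContinuousOn_iff.1 huc δ hδ
    obtain ⟨n, hn⟩ := exists_nat_one_div_lt hη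
    have hn0 : (0:ℝ) < n + 1 := by positivity
    let u : ℕ → ℝ := fun i => (i : ℝ) / (n + 1)
    have hu_mem : ∀ i ≤ n + 1, u i ∈ Set.Icc (0:ℝ) 1 := by
      intro i hi
      refine ⟨by positivity, ?_⟩
      rw [div_le_one hn0]; exact_mod_cast hi
    have htri : ∀ k ≤ n + 1, Real.arcsin ‖γ (u 0) - γ (u k)‖ ≤
        ∑ i ∈ Finset.range k, Real.arcsin ‖γ (u i) - γ (u (i + 1))‖ := by
      intro k
      induction k with
      | zero => simp
      | succ k ih =>
        intro hk
        rw [Finset.sum_range_succ]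
        have := proj_tri (hp _ (hu_mem 0 (by omega))) (hp _ (hu_mem k (by omega)))
          (hp _ (hu_mem (k + 1) hk))
        linarith [ih (by omega)]
    have hmono : MonotoneOn u (Set.Iic (n + 1)) := by
      intro i _ j _ hij
      have : (i : ℝ) ≤ j := by exact_mod_cast hij
      change (i : ℝ) / (n + 1) ≤ j / (n + 1)
      gcongr
    have hsum := eVariationOn.sum_le_of_monotoneOn_Iic (f := γ) hmono hu_mem
    have hsum' : ∑ i ∈ Finset.range (n + 1), ‖γ (u i) - γ (u (i + 1))‖ ≤ V := by
      have := ENNReal.toReal_mono hV hsum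
      rw [ENNReal.toReal_sum (fun _ _ => edist_ne_top _ _)] at this
      refine le_trans (le_of_eq (Finset.sum_congr rfl fun i _ => ?_)) this
      rw [edist_dist, ENNReal.toReal_ofReal dist_nonneg, dist_comm, dist_eq_norm]
    have h := htri (n + 1) le_rfl
    have u0 : u 0 = 0 := by simp [u]
    have u1 : u (n + 1) = 1 := by
      simp only [u]; push_cast; exact div_self hn0.ne'
    rw [u0, u1] at h
    refine h.trans ?_
    calc _ ≤ ∑ i ∈ Finset.range (n + 1), (1 + ε) * ‖γ (u i) - γ (u (i + 1))‖ := by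
          refine Finset.sum_le_sum fun i hi => hs _ (norm_nonneg _) ?_
          have hi' := Finset.mem_range.1 hi
          rw [← dist_eq_norm]
          refine hu _ (hu_mem i (by omega)) _ (hu_mem (i + 1) (by omega)) ?_
          have : u i - u (i + 1) = - (1 / (n + 1)) := by
            simp only [u]; push_cast; field_simp; ring
          rw [Real.dist_eq, this, abs_neg, abs_of_pos (by positivity)]
          exact hn
      _ = (1 + ε) * ∑ i ∈ Finset.range (n + 1), ‖γ (u i) - γ (u (i + 1))‖ := by
          rw [Finset.mul_sum]
      _ ≤ _ := by gcongr
  refine le_of_forall_pos_le_add fun ε hε => ?_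
  have := key (ε / (V + 1)) (by positivity)
  refine this.trans ?_
  have h2 : ε / (V + 1) * V ≤ ε := by
    rw [div_mul_eq_mul_div, div_le_iff₀ (by positivity)]; nlinarith
  linarith

end Lower

section Upper
variable {H : Type*} [NormedAddCommGroup H] [InnerProductSpace ℂ H] [CompleteSpace H]

open selfAdjoint Unitary

lemma exp_conj_sym {A : Type*} [CStarAlgebra A] {S : A} (hS2 : S * S = 1) (x : A) :
    NormedSpace.exp (S * x * S) = S * NormedSpace.exp x * S := by
  let +nondep : NormedAlgebra ℚ A := .restrictScalars ℚ ℂ A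
  exact NormedSpace.exp_units_conj (⟨S, S, hS2, hS2⟩ : Aˣ) x

lemma expUnitary_neg' {A : Type*} [CStarAlgebra A] (x : selfAdjoint A) :
    expUnitary (-x) = star (expUnitary x) := by
  have h : expUnitary (-x) * expUnitary x = 1 := by
    rw [← Commute.expUnitary_add (by simp)]
    simp
  have h2 := congrArg (· * star (expUnitary x)) h
  simpa [mul_assoc] using h2

lemma norm_expUnitary_sub_one_le {A : Type*} [CStarAlgebra A] {x : selfAdjoint A}
    (hx : ‖x‖ ≤ Real.pi) : ‖(expUnitary x - 1 : A)‖ ≤ ‖x‖ := by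
  refine (abs_le_of_sq_le_sq' ?_ (norm_nonneg _)).2
  rw [selfAdjoint.norm_sq_expUnitary_sub_one hx]
  linarith [Real.one_sub_sq_div_two_le_cos (x := ‖x‖)]

/-- logarithm of the product of two symmetries -/
lemma exists_log {A : Type*} [CStarAlgebra A] {S T : A} (hS : IsSelfAdjoint S) (hS2 : S * S = 1)
    (hT : IsSelfAdjoint T) (hT2 : T * T = 1) {d : ℝ} (hd : ‖T - S‖ = 2 * d) (hd1 : d < 1) :
    ∃ K : selfAdjoint A, ‖K‖ = 2 * Real.arcsin d ∧ (expUnitary K : A) = T * S ∧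
      S * (K : A) * S = -(K : A) := by
  have hd0 : 0 ≤ d := by linarith [norm_nonneg (T - S)]
  have hSu : S ∈ unitary A := by rw [Unitary.mem_iff, hS.star_eq]; exact ⟨hS2, hS2⟩
  have hTu : T ∈ unitary A := by rw [Unitary.mem_iff, hT.star_eq]; exact ⟨hT2, hT2⟩
  let s : unitary A := ⟨S, hSu⟩
  let t : unitary A := ⟨T, hTu⟩
  have hss : star s = s := Subtype.ext hS.star_eq
  have htt : star t = t := Subtype.ext hT.star_eq
  have hn : ‖((t * s : unitary A) - 1 : A)‖ = 2 * d := by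
    rw [← hd]
    have := Unitary.norm_sub_eq t s
    rw [hss] at this
    exact this.symm
  have hn2 : ‖((t * s : unitary A) - 1 : A)‖ < 2 := by rw [hn]; linarith
  have hnorm : ‖argSelfAdjoint (t * s)‖ = 2 * Real.arcsin d := by
    rw [Unitary.norm_argSelfAdjoint hn2, hn]
    refine Real.arccos_eq_of_eq_cos ?_ ?_ ?_
    · linarith [Real.arcsin_nonneg.2 hd0]
    · linarith [Real.arcsin_le_pi_div_two d]
    · rw [Real.cos_two_mul, Real.cos_sq', Real.sin_arcsin (by linarith) hd1.le]; ring
  have hlt : ‖argSelfAdjoint (t * s)‖ < Real.pi := by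
    rw [hnorm]; linarith [Real.arcsin_lt_pi_div_two.2 hd1]
  have hexp : expUnitary (argSelfAdjoint (t * s)) = t * s := expUnitary_argSelfAdjoint hn2
  refine ⟨argSelfAdjoint (t * s), hnorm, congrArg Subtype.val hexp, ?_⟩
  set K := argSelfAdjoint (t * s) with hK
  have hK' : IsSelfAdjoint (S * (K : A) * S) := by
    have := K.2.conjugate S
    rwa [hS.star_eq] at this
  let K' : selfAdjoint A := ⟨S * (K : A) * S, hK'⟩
  have hK'n : ‖K'‖ < Real.pi := by
    have : ‖S * (K : A) * S‖ = ‖(K : A)‖ := by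
      rw [CStarRing.norm_mul_mem_unitary _ hSu, CStarRing.norm_mem_unitary_mul _ hSu]
    exact this.trans_lt hlt
  have he : expUnitary K' = expUnitary (-K) := by
    rw [expUnitary_neg', hexp]
    ext
    have h1 : (Complex.I • (K' : A)) = S * (Complex.I • (K : A)) * S := by
      simp [K']
    have h2 : NormedSpace.exp (Complex.I • (K : A)) = T * S := congrArg Subtype.val hexp
    rw [expUnitary_coe, h1, exp_conj_sym hS2, h2]
    simp [s, t, hS.star_eq, hT.star_eq, mul_assoc, hS2]
  have h1 := argSelfAdjoint_expUnitary hK'n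
  have h2 := argSelfAdjoint_expUnitary (x := -K) (by rwa [norm_neg])
  have : K' = -K := by rw [← h1, ← h2, he]
  exact congrArg Subtype.val this

lemma sym_of_proj {P : H →L[ℂ] H} (hP : IsOrthogonalProjection P) :
    IsSelfAdjoint ((2:ℂ) • P - 1) ∧ ((2:ℂ) • P - 1) * ((2:ℂ) • P - 1) = 1 := by
  refine ⟨(IsSelfAdjoint.smul (by simp [isSelfAdjoint_iff]) hP.1).sub (IsSelfAdjoint.one _), ?_⟩
  simp only [sub_mul, mul_sub, smul_mul_assoc, mul_smul_comm, hP.2, mul_one, one_mul]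
  module

lemma proj_of_sym {S : H →L[ℂ] H} (hS : IsSelfAdjoint S) (hS2 : S * S = 1) :
    IsOrthogonalProjection ((2⁻¹:ℂ) • (1 + S)) := by
  refine ⟨IsSelfAdjoint.smul (by simp [isSelfAdjoint_iff]) ((IsSelfAdjoint.one _).add hS), ?_⟩
  simp only [add_mul, mul_add, smul_mul_assoc, mul_smul_comm, hS2, mul_one, one_mul]
  module

lemma sym_path {A : Type*} [CStarAlgebra A] {S T : A} (hS : IsSelfAdjoint S) (hS2 : S * S = 1)
    (hT : IsSelfAdjoint T) (hT2 : T * T = 1) {d : ℝ} (hd : ‖T - S‖ = 2 * d) (hd1 : d < 1) :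
    ∃ σ : ℝ → A, (∀ r, IsSelfAdjoint (σ r) ∧ σ r * σ r = 1) ∧ σ 0 = S ∧ σ 1 = T ∧
      ∀ a ∈ Set.Icc (0:ℝ) 1, ∀ b ∈ Set.Icc (0:ℝ) 1,
        ‖σ a - σ b‖ ≤ 2 * Real.arcsin d * |a - b| := by
  have hd0 : 0 ≤ d := by linarith [norm_nonneg (T - S)]
  have hSu : S ∈ unitary A := by rw [Unitary.mem_iff, hS.star_eq]; exact ⟨hS2, hS2⟩
  obtain ⟨K, hKn, hKe, hKS⟩ := exists_log hS hS2 hT hT2 hd hd1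
  have hanti : ∀ r : ℝ, S * (expUnitary (r • K) : A) * S = star (expUnitary (r • K) : A) := by
    intro r
    have h2 : S * (Complex.I • ((r • K : selfAdjoint A) : A)) * S =
        Complex.I • ((-(r • K) : selfAdjoint A) : A) := by
      simp only [selfAdjoint.val_smul, AddSubgroup.coe_neg, mul_smul_comm, smul_mul_assoc, hKS,
        smul_neg]
    have h3 := congrArg Subtype.val (expUnitary_neg' (r • K))
    rw [expUnitary_coe, ← exp_conj_sym hS2, h2]
    exact h3
  refine ⟨fun r => (expUnitary (r • K) : A) * S, ?_, ?_, ?_, ?_⟩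
  · intro r
    have h := hanti r
    have hu := (expUnitary (r • K)).2
    set E := (expUnitary (r • K) : A)
    constructor
    · change star (E * S) = E * S
      rw [star_mul, hS.star_eq, ← h, mul_assoc, ← mul_assoc, hS2, one_mul]
    · change E * S * (E * S) = 1
      rw [mul_assoc, ← mul_assoc S, h]
      exact (Unitary.mem_iff.1 hu).2
  · simp
  · simp only [one_smul, hKe, mul_assoc, hS2, mul_one]
  · intro a ha b hb
    have hab : |a - b| ≤ 1 := abs_le.2 ⟨by linarith [ha.1, hb.2], by linarith [ha.2, hb.1]⟩
    have e2 : expUnitary (a • K) * star (expUnitary (b • K)) = expUnitary ((a - b) • K) := by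
      rw [← expUnitary_neg', ← Commute.expUnitary_add]
      · rw [sub_smul, sub_eq_add_neg]
      · simp only [selfAdjoint.val_smul, AddSubgroup.coe_neg]
        exact (((Commute.refl (K : A)).smul_left a).smul_right b).neg_right
    have hn : ‖(a - b) • K‖ = |a - b| * (2 * Real.arcsin d) := by
      rw [← hKn, ← Real.norm_eq_abs]
      exact norm_smul (a - b) (K : A)
    have hasin : 0 ≤ Real.arcsin d := Real.arcsin_nonneg.2 hd0
    have hle := norm_expUnitary_sub_one_le (x := (a - b) • K) (by
      rw [hn]
      nlinarith [Real.arcsin_le_pi_div_two d])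
    rw [← sub_mul, CStarRing.norm_mul_mem_unitary _ hSu, Unitary.norm_sub_eq, e2]
    rw [hn] at hle
    linarith

lemma path_upper {P Q : H →L[ℂ] H} (hP : IsOrthogonalProjection P)
    (hQ : IsOrthogonalProjection Q) (hd : ‖P - Q‖ < 1) :
    projLengthMetric P Q ≤ ENNReal.ofReal (Real.arcsin ‖P - Q‖) := by
  obtain ⟨hS, hS2⟩ := sym_of_proj hP
  obtain ⟨hT, hT2⟩ := sym_of_proj hQ
  set S := (2:ℂ) • P - 1 with hSdef
  set T := (2:ℂ) • Q - 1 with hTdef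
  have hTS : ‖T - S‖ = 2 * ‖P - Q‖ := by
    rw [hSdef, hTdef, sub_sub_sub_cancel_right, ← smul_sub, norm_smul, norm_sub_rev]; simp
  obtain ⟨σ, hσ, hσ0, hσ1, hσL⟩ := sym_path hS hS2 hT hT2 hTS hd
  let γ : ℝ → (H →L[ℂ] H) := fun r => (2⁻¹:ℂ) • (1 + σ r)
  have hproj : ∀ r, IsOrthogonalProjection (γ r) := fun r => proj_of_sym (hσ r).1 (hσ r).2
  have h0 : γ 0 = P := by
    simp only [γ, hσ0, hSdef]
    module
  have h1 : γ 1 = Q := by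
    simp only [γ, hσ1, hTdef]
    module
  have hlip : ∀ a ∈ Set.Icc (0:ℝ) 1, ∀ b ∈ Set.Icc (0:ℝ) 1,
      ‖γ a - γ b‖ ≤ Real.arcsin ‖P - Q‖ * |a - b| := by
    intro a ha b hb
    have e1 : γ a - γ b = (2⁻¹:ℂ) • (σ a - σ b) := by
      simp only [γ]; module
    have : ‖(2⁻¹:ℂ)‖ = 2⁻¹ := by simp
    rw [e1, norm_smul, this]
    linarith [hσL a ha b hb]
  have hL : LipschitzOnWith (Real.toNNReal (Real.arcsin ‖P - Q‖)) γ (Set.Icc (0:ℝ) 1) := by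
    refine LipschitzOnWith.of_dist_le_mul fun a ha b hb => ?_
    rw [Real.coe_toNNReal _ (Real.arcsin_nonneg.2 (norm_nonneg _)), dist_eq_norm, Real.dist_eq]
    exact hlip a ha b hb
  have hvar : eVariationOn γ (Set.Icc (0:ℝ) 1) ≤ ENNReal.ofReal (Real.arcsin ‖P - Q‖) := by
    have h := hL.comp_eVariationOn_le (g := fun x : ℝ => x) (s := Set.Icc (0:ℝ) 1)
      (fun x hx => hx)
    have h2 : eVariationOn (fun x : ℝ => x) (Set.Icc (0:ℝ) 1) ≤ 1 := by
      have := (monotoneOn_id (s := Set.Icc (0:ℝ) 1)).eVariationOn_eq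
        (a := (0:ℝ)) (b := 1) (by simp) (by simp)
      rw [Set.inter_self] at this
      refine le_trans (le_of_eq this) ?_
      simp
    calc _ ≤ _ := h
      _ ≤ ENNReal.ofReal (Real.arcsin ‖P - Q‖) * 1 := by
        rw [ENNReal.ofReal]; gcongr
      _ = _ := mul_one _
  unfold projLengthMetric
  exact iInf_le_of_le γ (iInf_le_of_le hL.continuousOn (iInf_le_of_le (fun t _ => hproj t)
    (iInf_le_of_le h0 (iInf_le_of_le h1 hvar))))

end Upper

/-- For orthogonal projections `P, Q`: `ρ(P,Q) < π/2 ↔ ‖P − Q‖ < 1`, and if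
`‖P − Q‖ < 1` then `ρ(P,Q) = arcsin ‖P − Q‖`. -/
theorem projLengthMetric_lt_pi_div_two_iff {H : Type*} [NormedAddCommGroup H]
    [InnerProductSpace ℂ H] [CompleteSpace H] [TopologicalSpace.SeparableSpace H]
    (P Q : H →L[ℂ] H)
    (hP : IsOrthogonalProjection P) (hQ : IsOrthogonalProjection Q) :
    (projLengthMetric P Q < ENNReal.ofReal (Real.pi / 2) ↔ ‖P - Q‖ < 1) ∧
      (‖P - Q‖ < 1 →
        projLengthMetric P Q = ENNReal.ofReal (Real.arcsin ‖P - Q‖)) := by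
  have hlow : ENNReal.ofReal (Real.arcsin ‖P - Q‖) ≤ projLengthMetric P Q := by
    unfold projLengthMetric
    refine le_iInf fun γ => le_iInf fun hc => le_iInf fun hp => le_iInf fun h0 => le_iInf fun h1 => ?_
    have := path_lower hc hp
    rwa [h0, h1] at this
  refine ⟨⟨fun h => ?_, fun h => ?_⟩, fun h => le_antisymm (path_upper hP hQ h) hlow⟩
  · have h2 := hlow.trans_lt h
    rw [ENNReal.ofReal_lt_ofReal_iff (by positivity)] at h2
    exact Real.arcsin_lt_pi_div_two.1 h2
  · refine (path_upper hP hQ h).trans_lt ?_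
    rw [ENNReal.ofReal_lt_ofReal_iff (by positivity)]
    exact Real.arcsin_lt_pi_div_two.2 h
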